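/- Let α ∈ [0,1) and let c_α ∈ (0, π/2] satisfy sin(2c_α)/(2c_α) = α². Let u⁰ ∈ ℝ^N satisfy ‖u⁰‖_∞ ≤ min{π/4, c_α}, set d_α := ‖D^{−α}u⁰‖_∞, and assume d_α > 0. Let Δt > 0 satisfy Δt ≤ (3/4)·d_α^{−2}·h^{2(1−α)}. Then for all n ≥ 0 the iterates of the semi-implicit Euler scheme satisfy 𝓔_h(u^{n+1}) ≤ 𝓔_h(uⁿ). -/

import Mathlib

open Real Matrix

noncomputable section

/-- Mesh size `h = 1/(N+1)`. -/
def hmesh (N : ℕ) : ℝ := 1 / (N + 1)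

/-- Grid points `x_i = i·h`, `i = 1,…,N` (here `i : Fin N` corresponds to `i+1`). -/
def gridx (N : ℕ) (i : Fin N) : ℝ := ((i : ℕ) + 1) * hmesh N

/-- `A = (1/h²)·tridiag(−1,2,−1)`. -/
def matA (N : ℕ) : Matrix (Fin N) (Fin N) ℝ := fun i j =>
  (1 / (hmesh N) ^ 2) *
    (if (i : ℕ) = (j : ℕ) then 2
     else if (i : ℕ) + 1 = (j : ℕ) ∨ (j : ℕ) + 1 = (i : ℕ) then -1 else 0)

/-- `B = (1/(2h))·tridiag(−1,0,1)`. -/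
def matB (N : ℕ) : Matrix (Fin N) (Fin N) ℝ := fun i j =>
  (1 / (2 * hmesh N)) *
    (if (i : ℕ) + 1 = (j : ℕ) then 1
     else if (j : ℕ) + 1 = (i : ℕ) then -1 else 0)

/-- `D = diag(x_1,…,x_N)`. -/
def matD (N : ℕ) : Matrix (Fin N) (Fin N) ℝ := Matrix.diagonal (gridx N)

/-- `D^β = diag(x_1^β,…,x_N^β)` (real powers). -/
def matDpow (N : ℕ) (β : ℝ) : Matrix (Fin N) (Fin N) ℝ :=
  Matrix.diagonal (fun i => gridx N i ^ β)

/-- `C = A − D⁻¹B`. -/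
def matC (N : ℕ) : Matrix (Fin N) (Fin N) ℝ :=
  matA N - Matrix.diagonal (fun i => (gridx N i)⁻¹) * matB N

/-- `g(y) = sin(2y)/(2y)` for `y ≠ 0`, `g(0) = 1`. -/
def gfun (y : ℝ) : ℝ := if y = 0 then 1 else Real.sin (2 * y) / (2 * y)

/-- `G(u) = diag(g(u_1),…,g(u_N))`. -/
def matG {N : ℕ} (u : Fin N → ℝ) : Matrix (Fin N) (Fin N) ℝ :=
  Matrix.diagonal (fun i => gfun (u i))

/-- The matrix `I + Δt(C + G(v)D⁻²)` of the semi-implicit Euler scheme. -/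
def stepMat (N : ℕ) (Δt : ℝ) (v : Fin N → ℝ) : Matrix (Fin N) (Fin N) ℝ :=
  1 + Δt • (matC N + matG v * matDpow N (-2))

/-- Operator norm of a matrix induced by the maximum norm on `ℝ^N`
(the Pi norm on `Fin N → ℝ` is the sup norm). -/
def opNormInf {N : ℕ} (M : Matrix (Fin N) (Fin N) ℝ) : ℝ :=
  ‖(LinearMap.toContinuousLinearMap (Matrix.mulVecLin M) :
      (Fin N → ℝ) →L[ℝ] (Fin N → ℝ))‖

end

/-- Discrete Dirichlet energy `𝓔_h(u) = h⟨DCu,u⟩ + h⟨D⁻¹F(u),F(u)⟩`,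
with `F(u) = (sin u_1,…,sin u_N)ᵀ`. -/
noncomputable def energyh (N : ℕ) (v : Fin N → ℝ) : ℝ :=
  hmesh N * ((matD N * matC N).mulVec v ⬝ᵥ v) +
    hmesh N * ((matDpow N (-1)).mulVec (fun i => Real.sin (v i)) ⬝ᵥ fun i => Real.sin (v i))

lemma hmesh_pos (N : ℕ) : 0 < hmesh N := by
  unfold hmesh
  positivity

lemma gridx_pos {N : ℕ} (i : Fin N) : 0 < gridx N i :=
  mul_pos (by positivity) (hmesh_pos N)

lemma matC_apply {N : ℕ} (i j : Fin N) :
    matC N i j = (1 / hmesh N ^ 2) *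
      ((if (i : ℕ) = (j : ℕ) then (2 : ℝ) else 0)
        + (if (i : ℕ) + 1 = (j : ℕ) then -(1 + 1 / (2 * (((i : ℕ) : ℝ) + 1))) else 0)
        + (if (j : ℕ) + 1 = (i : ℕ) then -(1 - 1 / (2 * (((i : ℕ) : ℝ) + 1))) else 0)) := by
  have hh := (hmesh_pos N).ne'
  have hi : ((i : ℕ) : ℝ) + 1 ≠ 0 := by positivity
  simp only [matC, Matrix.sub_apply, Matrix.diagonal_mul, matA, matB, gridx]
  split_ifs <;> first | omega | (field_simp; try ring)

lemma one_div_two_mul_succ_le_one (k : ℕ) : (1 : ℝ) / (2 * ((k : ℝ) + 1)) ≤ 1 := by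
  rw [div_le_one (by positivity)]
  have : (0 : ℝ) ≤ k := k.cast_nonneg
  linarith

lemma matC_nonpos_of_ne {N : ℕ} {i j : Fin N} (hij : i ≠ j) : matC N i j ≤ 0 := by
  have hij' : (i : ℕ) ≠ (j : ℕ) := fun h => hij (Fin.ext h)
  have h1 := one_div_two_mul_succ_le_one (i : ℕ)
  have h2 : (0 : ℝ) ≤ 1 / (2 * ((i : ℕ) + 1)) := by positivity
  rw [matC_apply, if_neg hij']
  refine mul_nonpos_of_nonneg_of_nonpos (by positivity) ?_
  split_ifs <;> linarith

lemma matC_row_sum_nonneg {N : ℕ} (i : Fin N) : 0 ≤ ∑ j, matC N i j := by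
  have h1 := one_div_two_mul_succ_le_one (i : ℕ)
  have h2 : (0 : ℝ) ≤ 1 / (2 * ((i : ℕ) + 1)) := by positivity
  simp only [matC_apply, ← Finset.mul_sum, Finset.sum_add_distrib]
  refine mul_nonneg (by positivity) ?_
  set c : ℝ := 1 / (2 * ((i : ℕ) + 1))
  have e1 : ∑ j : Fin N, (if (i : ℕ) = (j : ℕ) then (2 : ℝ) else 0) = 2 := by
    simp [Fin.val_inj]
  have e2 : -(1 + c) ≤ ∑ j : Fin N, (if (i : ℕ) + 1 = (j : ℕ) then -(1 + c) else 0) := by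
    rw [Fin.sum_univ_eq_sum_range (fun j => if (i : ℕ) + 1 = j then -(1 + c) else 0) N,
      Finset.sum_ite_eq]
    split_ifs <;> linarith
  have e3 : -(1 - c) ≤ ∑ j : Fin N, (if (j : ℕ) + 1 = (i : ℕ) then -(1 - c) else 0) := by
    rw [Fin.sum_univ_eq_sum_range (fun j => if j + 1 = (i : ℕ) then -(1 - c) else 0) N]
    rcases (i : ℕ) with _ | k
    · simpa using h1
    · simp only [Nat.add_right_cancel_iff, Finset.sum_ite_eq']
      split_ifs <;> linarith
  linarith

lemma matD_mul_matC_apply {N : ℕ} (i j : Fin N) :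
    (matD N * matC N) i j = gridx N i * matC N i j := by
  simp [matD, Matrix.diagonal_mul]

lemma matD_mul_matC_isSymm (N : ℕ) : (matD N * matC N).IsSymm := by
  have hlt : ∀ i j : Fin N, i < j → (matD N * matC N) j i = (matD N * matC N) i j := by
    intro i j hij
    have hij' : (i : ℕ) < (j : ℕ) := hij
    have hh := (hmesh_pos N).ne'
    have hi : ((i : ℕ) : ℝ) + 1 ≠ 0 := by positivity
    have hj : ((j : ℕ) : ℝ) + 1 ≠ 0 := by positivity
    rw [matD_mul_matC_apply, matD_mul_matC_apply, matC_apply, matC_apply, gridx, gridx]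
    rw [if_neg hij'.ne', if_neg hij'.ne, if_neg (by omega : ¬(j : ℕ) + 1 = (i : ℕ)),
      if_neg (by omega : ¬(j : ℕ) + 1 = (i : ℕ))]
    split_ifs with h
    · have hc : ((j : ℕ) : ℝ) = (i : ℕ) + 1 := by exact_mod_cast h.symm
      rw [hc] at hj ⊢
      field_simp
      ring
    · simp
  refine Matrix.IsSymm.ext fun i j => ?_
  rcases lt_trichotomy i j with h | h | h
  · exact hlt i j h
  · rw [h]
  · exact (hlt j i h).symm

/-- A symmetric matrix with nonpositive off-diagonal entries and nonnegative row sums has a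
nonnegative quadratic form. -/
lemma mulVec_dotProduct_self_nonneg_of_row_sum_nonneg {ι : Type*} [Fintype ι]
    {M : Matrix ι ι ℝ} (hsymm : M.IsSymm) (hoff : ∀ i j, i ≠ j → M i j ≤ 0)
    (hrow : ∀ i, 0 ≤ ∑ j, M i j) (w : ι → ℝ) : 0 ≤ M *ᵥ w ⬝ᵥ w := by
  have hle : ∑ i, ∑ j, M i j * ((w i ^ 2 + w j ^ 2) / 2) ≤ M *ᵥ w ⬝ᵥ w := by
    simp only [dotProduct, Matrix.mulVec, Finset.sum_mul]
    refine Finset.sum_le_sum fun i _ => Finset.sum_le_sum fun j _ => ?_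
    by_cases hij : i = j
    · subst hij
      exact le_of_eq (by ring)
    · nlinarith [mul_nonneg (neg_nonneg.2 (hoff i j hij)) (sq_nonneg (w i - w j))]
  have hswap : ∑ i, ∑ j, M i j * w j ^ 2 = ∑ i, ∑ j, M i j * w i ^ 2 := by
    rw [Finset.sum_comm]
    exact Finset.sum_congr rfl fun i _ => Finset.sum_congr rfl fun j _ => by
      rw [hsymm.apply i j]
  have heq : ∑ i, ∑ j, M i j * ((w i ^ 2 + w j ^ 2) / 2) = ∑ i, (∑ j, M i j) * w i ^ 2 := by
    have : ∀ i j, M i j * ((w i ^ 2 + w j ^ 2) / 2) =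
        (M i j * w i ^ 2) / 2 + (M i j * w j ^ 2) / 2 := fun i j => by ring
    simp only [this, Finset.sum_add_distrib, ← Finset.sum_div, hswap, Finset.sum_mul]
    ring
  calc 0 ≤ ∑ i, (∑ j, M i j) * w i ^ 2 :=
        Finset.sum_nonneg fun i _ => mul_nonneg (hrow i) (sq_nonneg _)
    _ ≤ M *ᵥ w ⬝ᵥ w := heq ▸ hle

/-- Discrete maximum principle: nonpositive off-diagonal entries and row sums at least one make
the inverse a sup-norm contraction. -/
lemma norm_le_norm_mulVec_of_one_le_row_sum {ι : Type*} [Fintype ι]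
    {M : Matrix ι ι ℝ} (hoff : ∀ i j, i ≠ j → M i j ≤ 0)
    (hrow : ∀ i, 1 ≤ ∑ j, M i j) (v : ι → ℝ) : ‖v‖ ≤ ‖M *ᵥ v‖ := by
  rcases isEmpty_or_nonempty ι with hι | hι
  · simp [Subsingleton.elim v 0]
  obtain ⟨i, hi⟩ := Finite.exists_max fun i => |v i|
  have key : ∀ s : ℝ, |s| = 1 → s * v i = |v i| → |v i| ≤ |(M *ᵥ v) i| := by
    intro s hs hsv
    calc |v i| ≤ (∑ j, M i j) * |v i| := le_mul_of_one_le_left (abs_nonneg _) (hrow i)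
      _ = ∑ j, M i j * |v i| := Finset.sum_mul ..
      _ ≤ ∑ j, M i j * (s * v j) := by
        refine Finset.sum_le_sum fun j _ => ?_
        by_cases hij : i = j
        · subst hij
          rw [hsv]
        · refine mul_le_mul_of_nonpos_left ?_ (hoff i j hij)
          calc s * v j ≤ |s * v j| := le_abs_self _
            _ = |v j| := by rw [abs_mul, hs, one_mul]
            _ ≤ |v i| := hi j
      _ = s * (M *ᵥ v) i := by
        simp only [Matrix.mulVec, dotProduct, Finset.mul_sum]
        exact Finset.sum_congr rfl fun j _ => by ring
      _ ≤ |s * (M *ᵥ v) i| := le_abs_self _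
      _ = |(M *ᵥ v) i| := by rw [abs_mul, hs, one_mul]
  have hvi : |v i| ≤ |(M *ᵥ v) i| := by
    rcases le_total 0 (v i) with h | h
    · exact key 1 (by simp) (by rw [abs_of_nonneg h, one_mul])
    · exact key (-1) (by simp) (by rw [abs_of_nonpos h, neg_one_mul])
  refine (pi_norm_le_iff_of_nonneg (norm_nonneg _)).2 fun j => ?_
  exact ((hi j).trans hvi).trans (norm_le_pi_norm (M *ᵥ v) i)

lemma half_le_gfun {y : ℝ} (hy : |y| ≤ π / 4) : 1 / 2 ≤ gfun y := by
  have pos : ∀ z : ℝ, 0 < z → z ≤ π / 4 → 1 / 2 ≤ Real.sin (2 * z) / (2 * z) := by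
    intro z hz hz'
    have h := Real.mul_le_sin (x := 2 * z) (by linarith) (by linarith)
    have hpi : (1 : ℝ) / 2 ≤ 2 / π := by
      rw [div_le_div_iff₀ two_pos Real.pi_pos]
      linarith [Real.pi_le_four]
    rw [le_div_iff₀ (by linarith)]
    nlinarith
  unfold gfun
  split_ifs with h0
  · norm_num
  rcases lt_or_gt_of_ne h0 with h | h
  · have := pos (-y) (by linarith) (by rwa [abs_of_neg h] at hy)
    rwa [mul_neg, Real.sin_neg, neg_div_neg_eq] at this
  · exact pos y h (by rwa [abs_of_pos h] at hy)

lemma two_mul_gfun_mul (y : ℝ) : 2 * gfun y * y = Real.sin (2 * y) := by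
  unfold gfun
  split_ifs with h
  · simp [h]
  · field_simp

lemma sin_sq_sub_sin_sq_le (a b : ℝ) :
    Real.sin b ^ 2 - Real.sin a ^ 2 ≤ Real.sin (2 * a) * (b - a) + (b - a) ^ 2 := by
  have hder : ∀ s : ℝ, HasDerivAt (fun s : ℝ => s ^ 2 - Real.sin s ^ 2)
      (2 * s - Real.sin (2 * s)) s := by
    intro s
    refine ((hasDerivAt_pow 2 s).fun_sub ((Real.hasDerivAt_sin s).fun_pow 2)).congr_deriv ?_
    rw [Real.sin_two_mul]
    push_cast
    ring
  have hmono : Monotone fun s : ℝ => 2 * s - Real.sin (2 * s) := by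
    refine monotone_of_hasDerivAt_nonneg (f' := fun s => 2 - 2 * Real.cos (2 * s)) ?_ ?_
    · intro s
      have h2 : HasDerivAt (fun s : ℝ => 2 * s) 2 s := by
        simpa using (hasDerivAt_id s).const_mul 2
      exact (h2.fun_sub h2.sin).congr_deriv (by ring)
    · intro s
      have := Real.cos_le_one (2 * s)
      simp only [Pi.zero_apply]
      linarith
  have hd : deriv (fun s : ℝ => s ^ 2 - Real.sin s ^ 2) = fun s => 2 * s - Real.sin (2 * s) :=
    funext fun s => (hder s).deriv
  have hconv : ConvexOn ℝ Set.univ fun s : ℝ => s ^ 2 - Real.sin s ^ 2 :=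
    Monotone.convexOn_univ_of_deriv (fun s => (hder s).differentiableAt) (hd ▸ hmono)
  rcases lt_trichotomy a b with h | h | h
  · have := hconv.le_slope_of_hasDerivAt (Set.mem_univ a) (Set.mem_univ b) h (hder a)
    rw [slope_def_field, le_div_iff₀ (by linarith)] at this
    nlinarith
  · simp [h]
  · have := hconv.slope_le_of_hasDerivAt (Set.mem_univ b) (Set.mem_univ a) h (hder a)
    rw [slope_def_field, div_le_iff₀ (by linarith)] at this
    nlinarith

lemma stepMat_apply {N : ℕ} (Δt : ℝ) (u : Fin N → ℝ) (i j : Fin N) :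
    stepMat N Δt u i j =
      Δt * matC N i j + if i = j then 1 + Δt * (gfun (u i) * (gridx N i ^ 2)⁻¹) else 0 := by
  by_cases hij : i = j
  · subst hij
    simp [stepMat, matG, matDpow]
    ring
  · simp [stepMat, matG, matDpow, hij]

lemma stepMat_mulVec_apply {N : ℕ} (Δt : ℝ) (u v : Fin N → ℝ) (i : Fin N) :
    (stepMat N Δt u *ᵥ v) i =
      v i + Δt * ((matC N *ᵥ v) i + gfun (u i) * (gridx N i ^ 2)⁻¹ * v i) := by
  simp only [Matrix.mulVec, dotProduct, stepMat_apply, add_mul, ite_mul, zero_mul,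
    Finset.sum_add_distrib, Finset.sum_ite_eq, Finset.mem_univ, if_true, mul_add,
    Finset.mul_sum, mul_assoc]
  ring

/-- One semi-implicit step does not increase the sup norm when `g(u) ≥ 0`. -/
lemma norm_le_of_stepMat_mulVec_eq {N : ℕ} {Δt : ℝ} (hΔt : 0 ≤ Δt) {u v : Fin N → ℝ}
    (hg : ∀ i, 0 ≤ gfun (u i)) (hstep : stepMat N Δt u *ᵥ v = u) : ‖v‖ ≤ ‖u‖ := by
  have := norm_le_norm_mulVec_of_one_le_row_sum (M := stepMat N Δt u) ?_ ?_ v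
  · rwa [hstep] at this
  · intro i j hij
    rw [stepMat_apply, if_neg hij, add_zero]
    exact mul_nonpos_of_nonneg_of_nonpos hΔt (matC_nonpos_of_ne hij)
  · intro i
    simp only [stepMat_apply, Finset.sum_add_distrib, ← Finset.mul_sum, Finset.sum_ite_eq,
      Finset.mem_univ, if_true]
    have h1 := mul_nonneg hΔt (matC_row_sum_nonneg i)
    have h2 : 0 ≤ Δt * (gfun (u i) * (gridx N i ^ 2)⁻¹) :=
      mul_nonneg hΔt (mul_nonneg (hg i) (by positivity))
    linarith

lemma energyh_eq {N : ℕ} (v : Fin N → ℝ) :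
    energyh N v = hmesh N *
      ((matD N * matC N) *ᵥ v ⬝ᵥ v + ∑ i, Real.sin (v i) ^ 2 / gridx N i) := by
  unfold energyh
  rw [mul_add]
  congr 2
  simp only [matDpow, Matrix.mulVec_diagonal, dotProduct, Real.rpow_neg_one]
  exact Finset.sum_congr rfl fun i _ => by ring

/-- For a symmetric positive semidefinite form, the increment is at most the implicit
linearization. -/
lemma mulVec_dotProduct_self_sub_le {ι : Type*} [Fintype ι] {M : Matrix ι ι ℝ}
    (hsymm : M.IsSymm) (hpos : ∀ w : ι → ℝ, 0 ≤ M *ᵥ w ⬝ᵥ w) (u v : ι → ℝ) :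
    M *ᵥ v ⬝ᵥ v - M *ᵥ u ⬝ᵥ u ≤ 2 * (M *ᵥ v ⬝ᵥ (v - u)) := by
  have hw := hpos (v - u)
  have hcomm : M *ᵥ u ⬝ᵥ v = M *ᵥ v ⬝ᵥ u := by
    rw [dotProduct_comm, Matrix.dotProduct_mulVec, ← Matrix.mulVec_transpose, hsymm.eq]
  simp only [Matrix.mulVec_sub, sub_dotProduct, dotProduct_sub] at hw ⊢
  linarith

/-- One semi-implicit step dissipates the energy when `g(u) ≥ 1/2`. -/
lemma energyh_le_of_stepMat_mulVec_eq {N : ℕ} {Δt : ℝ} (hΔt : 0 < Δt) {u v : Fin N → ℝ}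
    (hg : ∀ i, 1 / 2 ≤ gfun (u i)) (hstep : stepMat N Δt u *ᵥ v = u) :
    energyh N v ≤ energyh N u := by
  rw [energyh_eq, energyh_eq]
  refine mul_le_mul_of_nonneg_left ?_ (hmesh_pos N).le
  have hsymm := matD_mul_matC_isSymm N
  have hquad := mulVec_dotProduct_self_sub_le hsymm
    (mulVec_dotProduct_self_nonneg_of_row_sum_nonneg hsymm
      (fun i j hij => by
        rw [matD_mul_matC_apply]
        exact mul_nonpos_of_nonneg_of_nonpos (gridx_pos i).le (matC_nonpos_of_ne hij))
      (fun i => by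
        simp only [matD_mul_matC_apply, ← Finset.mul_sum]
        exact mul_nonneg (gridx_pos i).le (matC_row_sum_nonneg i))) u v
  have hsum : 2 * ((matD N * matC N) *ᵥ v ⬝ᵥ (v - u)) + ∑ i, Real.sin (v i) ^ 2 / gridx N i
      - ∑ i, Real.sin (u i) ^ 2 / gridx N i ≤ 0 := by
    rw [← Matrix.mulVec_mulVec]
    simp only [dotProduct, matD, Matrix.mulVec_diagonal, Finset.mul_sum,
      ← Finset.sum_add_distrib, ← Finset.sum_sub_distrib, Pi.sub_apply]
    refine Finset.sum_nonpos fun i _ => ?_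
    have hx := gridx_pos i
    have hi := congrFun hstep i
    rw [stepMat_mulVec_apply] at hi
    have hC : (matC N *ᵥ v) i =
        -(v i - u i) / Δt - gfun (u i) * (gridx N i ^ 2)⁻¹ * v i := by
      field_simp at hi ⊢
      linarith
    have hsin := sin_sq_sub_sin_sq_le (u i) (v i)
    rw [← two_mul_gfun_mul] at hsin
    have hsplit : 2 * (gridx N i * (matC N *ᵥ v) i * (v i - u i))
          + Real.sin (v i) ^ 2 / gridx N i - Real.sin (u i) ^ 2 / gridx N i
        = (Real.sin (v i) ^ 2 - Real.sin (u i) ^ 2 - 2 * gfun (u i) * v i * (v i - u i))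
            / gridx N i - 2 * gridx N i * (v i - u i) ^ 2 / Δt := by
      rw [hC]
      field_simp
      ring
    rw [hsplit]
    have h1 : (Real.sin (v i) ^ 2 - Real.sin (u i) ^ 2 - 2 * gfun (u i) * v i * (v i - u i))
        / gridx N i ≤ 0 := by
      refine div_nonpos_of_nonpos_of_nonneg ?_ hx.le
      nlinarith [mul_nonneg (sub_nonneg.2 (hg i)) (sq_nonneg (v i - u i))]
    have h2 : 0 ≤ 2 * gridx N i * (v i - u i) ^ 2 / Δt := by positivity
    linarith
  linarith

/-- Monotone discrete energy dissipation: if `α ∈ [0,1)`, `c_α ∈ (0,π/2]` with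
`sin(2c_α)/(2c_α) = α²`, `‖u⁰‖_∞ ≤ min{π/4, c_α}`, `d_α := ‖D^{−α}u⁰‖_∞ > 0` and
`Δt ≤ (3/4)·d_α^{−2}·h^{2(1−α)}`, then the semi-implicit Euler iterates satisfy
`𝓔_h(u^{n+1}) ≤ 𝓔_h(uⁿ)` for all `n ≥ 0`. -/
theorem stmt17 {N : ℕ} (hN : 1 ≤ N) (α : ℝ) (hα : α ∈ Set.Ico (0 : ℝ) 1)
    (cα : ℝ) (hcα : cα ∈ Set.Ioc (0 : ℝ) (π / 2))
    (hceq : Real.sin (2 * cα) / (2 * cα) = α ^ 2)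
    (u0 : Fin N → ℝ) (hu0 : ‖u0‖ ≤ min (π / 4) cα)
    (hd : 0 < ‖(matDpow N (-α)).mulVec u0‖)
    (Δt : ℝ) (hΔt : 0 < Δt)
    (hΔt2 : Δt ≤ 3 / 4 * (‖(matDpow N (-α)).mulVec u0‖ ^ 2)⁻¹ * hmesh N ^ (2 * (1 - α)))
    (u : ℕ → Fin N → ℝ) (h0 : u 0 = u0)
    (hrec : ∀ n, (stepMat N Δt (u n)).mulVec (u (n + 1)) = u n) :
    ∀ n, energyh N (u (n + 1)) ≤ energyh N (u n) := by
  have hbound : ∀ n, ‖u n‖ ≤ π / 4 := by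
    intro n
    induction n with
    | zero => exact h0 ▸ hu0.trans (min_le_left _ _)
    | succ k ih =>
      refine (norm_le_of_stepMat_mulVec_eq hΔt.le (fun i => ?_) (hrec k)).trans ih
      linarith [half_le_gfun ((norm_le_pi_norm (u k) i).trans ih)]
  exact fun n => energyh_le_of_stepMat_mulVec_eq hΔt
    (fun i => half_le_gfun ((norm_le_pi_norm (u n) i).trans (hbound n))) (hrec n)
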